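/- arXiv:1208.2455 — 7 statements merged into one kernel-verified Lean document; each statement's English description precedes it below -/
import Mathlib

section
/- Let c > 0 and m > 0 be real numbers, and let a, b > 0 satisfy √c·(a+b) < π and √c·(cot(√c·a) + cot(√c·b)) = 2m. Then a + b ≥ (2/√c)·arctan(√c/m). -/
open Real

/-- Inverted form of the cotangent midpoint inequality: if `c > 0`, `m > 0`,
`a, b > 0`, `√c·(a+b) < π` and `√c·(cot(√c·a) + cot(√c·b)) = 2m`, then
`a + b ≥ (2/√c)·arctan(√c/m)`. -/
theorem sum_ge_of_cot_mirror (c m a b : ℝ)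
    (hc : 0 < c) (hm : 0 < m) (ha : 0 < a) (hb : 0 < b)
    (hab : Real.sqrt c * (a + b) < π)
    (hmirror : Real.sqrt c * (Real.cot (Real.sqrt c * a) + Real.cot (Real.sqrt c * b)) = 2 * m) :
    a + b ≥ (2 / Real.sqrt c) * Real.arctan (Real.sqrt c / m) := by
  have hs : 0 < Real.sqrt c := Real.sqrt_pos.mpr hc
  generalize Real.sqrt c = s at *
  have hsa : 0 < s * a := mul_pos hs ha
  have hsb : 0 < s * b := mul_pos hs hb
  obtain ⟨u, hu⟩ : ∃ u, u = (s * a + s * b) / 2 := ⟨_, rfl⟩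
  obtain ⟨d, hd⟩ : ∃ d, d = (s * a - s * b) / 2 := ⟨_, rfl⟩
  have hx : s * a = u + d := by rw [hu, hd]; ring
  have hy : s * b = u - d := by rw [hu, hd]; ring
  have hu0 : 0 < u := by linarith
  have hu1 : u < π / 2 := by nlinarith
  have h1 : 0 < sin (u + d) := sin_pos_of_pos_of_lt_pi (by linarith) (by linarith)
  have h2 : 0 < sin (u - d) := sin_pos_of_pos_of_lt_pi (by linarith) (by linarith)
  have hsu : 0 < sin u := sin_pos_of_pos_of_lt_pi hu0 (by linarith)
  have hcu : 0 < cos u := cos_pos_of_mem_Ioo ⟨by linarith, hu1⟩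
  rw [hx, hy, Real.cot_eq_cos_div_sin, Real.cot_eq_cos_div_sin, div_add_div _ _ h1.ne' h2.ne',
    mul_div_assoc', div_eq_iff (mul_pos h1 h2).ne'] at hmirror
  have e1 : cos (u + d) * sin (u - d) + sin (u + d) * cos (u - d) = 2 * sin u * cos u := by
    rw [← sin_two_mul, show 2 * u = (u + d) + (u - d) by ring, sin_add (u + d)]; ring
  have e2 : sin (u + d) * sin (u - d) = sin u ^ 2 - sin d ^ 2 := by
    rw [sin_add, sin_sub]
    linear_combination (sin u ^ 2) * sin_sq_add_cos_sq d - (sin d ^ 2) * sin_sq_add_cos_sq u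
  rw [e1, e2] at hmirror
  have key : s * cos u ≤ m * sin u := by
    have : (s * cos u) * sin u ≤ (m * sin u) * sin u := by
      nlinarith [mul_nonneg hm.le (sq_nonneg (sin d))]
    exact le_of_mul_le_mul_right this hsu
  have ht : s / m ≤ tan u := by
    rw [tan_eq_sin_div_cos, div_le_div_iff₀ hm hcu]; linarith
  have hA : arctan (s / m) ≤ u := by
    rw [← arctan_tan (by linarith : -(π / 2) < u) hu1]
    exact arctan_le_arctan_iff.mpr ht
  rw [ge_iff_le, div_mul_eq_mul_div, div_le_iff₀ hs]
  nlinarith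
end

section
/- For all real numbers k > β > 0, the integral ∫₀^π (2/β)·arctan( β·sin φ / (k − β·cos φ) )·sin φ dφ equals π/k. In particular, this integral is independent of β. -/
open Real intervalIntegral

/-- Planar case (K = 0): for `k > β > 0`,
`∫₀^π (2/β)·arctan(β sin φ / (k − β cos φ))·sin φ dφ = π/k`,
independently of `β`. -/
theorem planar_inner_integral (k β : ℝ) (hβ : 0 < β) (hk : β < k) :
    ∫ φ in (0:ℝ)..π,
      (2 / β) * Real.arctan (β * Real.sin φ / (k - β * Real.cos φ)) * Real.sin φ
      = π / k := by
  have hk0 : 0 < k := hβ.trans hk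
  have hpos : ∀ x : ℝ, 0 < k - β * Real.cos x := fun x => by
    nlinarith [Real.cos_le_one x]
  have hT : ∀ x : ℝ, HasDerivAt
      (fun x => Real.arctan (β * Real.sin x / (k - β * Real.cos x)))
      ((k * β * Real.cos x - β ^ 2) / (k ^ 2 + β ^ 2 - 2 * k * β * Real.cos x)) x := by
    intro x
    have hx := hpos x
    have h1 : HasDerivAt (fun x => β * Real.sin x) (β * Real.cos x) x :=
      (Real.hasDerivAt_sin x).const_mul β
    have h2 : HasDerivAt (fun x => k - β * Real.cos x) (-(β * -Real.sin x)) x :=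
      ((Real.hasDerivAt_cos x).const_mul β).const_sub k
    have h3 := (h1.div h2 hx.ne').arctan
    refine h3.congr_deriv ?_
    have hsc := Real.sin_sq_add_cos_sq x
    have hD : k ^ 2 + β ^ 2 - 2 * k * β * Real.cos x
        = (k - β * Real.cos x) ^ 2 + (β * Real.sin x) ^ 2 := by
      linear_combination (-β ^ 2) * hsc
    have hN : k * β * Real.cos x - β ^ 2
        = β * Real.cos x * (k - β * Real.cos x) - β * Real.sin x * (β * Real.sin x) := by
      linear_combination β ^ 2 * hsc
    rw [hD, hN]
    simp only [Pi.div_apply]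
    generalize k - β * Real.cos x = u at *
    have : 0 < u ^ 2 + (β * Real.sin x) ^ 2 := by positivity
    field_simp
  have hF : ∀ x : ℝ, HasDerivAt
      (fun x => (2 / β) * (((k ^ 2 + β ^ 2) / (2 * k * β) - Real.cos x) *
        Real.arctan (β * Real.sin x / (k - β * Real.cos x)) - Real.sin x / 2
        + β / (2 * k) * x))
      ((2 / β) * Real.arctan (β * Real.sin x / (k - β * Real.cos x)) * Real.sin x) x := by
    intro x
    have h := (((((Real.hasDerivAt_cos x).const_sub ((k ^ 2 + β ^ 2) / (2 * k * β))).mul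
      (hT x)).sub ((Real.hasDerivAt_sin x).div_const 2)).add
      ((hasDerivAt_id x).const_mul (β / (2 * k)))).const_mul (2 / β)
    refine h.congr_deriv ?_
    have hDp : 0 < k ^ 2 + β ^ 2 - 2 * k * β * Real.cos x := by
      nlinarith [Real.cos_le_one x, mul_pos hk0 hβ, sq_pos_of_pos (sub_pos.2 hk)]
    generalize Real.arctan _ = T
    have e : (k ^ 2 + β ^ 2) / (2 * k * β) - Real.cos x
        = (k ^ 2 + β ^ 2 - 2 * k * β * Real.cos x) / (2 * k * β) := by
      field_simp
    rw [e]
    generalize k ^ 2 + β ^ 2 - 2 * k * β * Real.cos x = D at *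
    field_simp
    ring
  have hc : Continuous (fun φ : ℝ =>
      (2 / β) * Real.arctan (β * Real.sin φ / (k - β * Real.cos φ)) * Real.sin φ) := by
    have : Continuous (fun φ : ℝ => β * Real.sin φ / (k - β * Real.cos φ)) :=
      Continuous.div (by fun_prop) (by fun_prop) (fun x => (hpos x).ne')
    exact (continuous_const.mul (Real.continuous_arctan.comp this)).mul Real.continuous_sin
  rw [integral_eq_sub_of_hasDerivAt (fun x _ => hF x) (hc.intervalIntegrable _ _)]
  simp
  field_simp
end

section
/- For all real numbers k > β ≥ 0, the integral ∫₀^π (2/√(1+β²))·arctan( √(1+β²)·sin φ / (k − β·cos φ) )·sin φ dφ equals 2π(√(k²+1) − k). In particular, this integral is independent of β. -/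
open Real intervalIntegral

lemma aux_deriv (a q e : ℝ) (he : e ^ 2 = 1) (ha : 1 < a) (hq : 0 < q) (h : q ^ 2 = a ^ 2 - 1) (x : ℝ) :
    HasDerivAt (fun x => x + 2 * e * Real.arctan (Real.sin x / (a + q - e * Real.cos x)))
      (q / (a - e * Real.cos x)) x := by
  have hec : e * Real.cos x ≤ 1 := by
    nlinarith [sq_nonneg (e - Real.cos x), Real.sin_sq_add_cos_sq x, sq_nonneg (Real.sin x)]
  have h1 : a + q - e * Real.cos x ≠ 0 := by linarith
  have h2 : a - e * Real.cos x ≠ 0 := by linarith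
  have hd := (hasDerivAt_id x).add
    ((((Real.hasDerivAt_sin x).div
      (((Real.hasDerivAt_cos x).const_mul e).const_sub (a + q)) h1).arctan).const_mul (2 * e))
  refine hd.congr_deriv ?_
  have hp : a + q ≠ 0 := by linarith
  have key : (a + q - e * Real.cos x) ^ 2 + Real.sin x ^ 2
      = 2 * (a + q) * (a - e * Real.cos x) := by
    linear_combination h + Real.sin_sq_add_cos_sq x + Real.cos x ^ 2 * he
  have e1 : 1 + (Real.sin x / (a + q - e * Real.cos x)) ^ 2
      = 2 * (a + q) * (a - e * Real.cos x) / (a + q - e * Real.cos x) ^ 2 := by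
    rw [← key]; field_simp
  simp only [Pi.div_apply]
  rw [e1]
  field_simp
  linear_combination (-e ^ 2) * Real.sin_sq_add_cos_sq x - h - he

theorem spherical_inner_integral (k β : ℝ) (hβ : 0 ≤ β) (hk : β < k) :
    ∫ φ in (0:ℝ)..π,
      (2 / Real.sqrt (1 + β ^ 2)) *
        Real.arctan (Real.sqrt (1 + β ^ 2) * Real.sin φ / (k - β * Real.cos φ)) *
        Real.sin φ
      = 2 * π * (Real.sqrt (k ^ 2 + 1) - k) := by
  have hs2 : Real.sqrt (1 + β ^ 2) ^ 2 = 1 + β ^ 2 := Real.sq_sqrt (by positivity)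
  have hr2 : Real.sqrt (k ^ 2 + 1) ^ 2 = k ^ 2 + 1 := Real.sq_sqrt (by positivity)
  have hs : 0 < Real.sqrt (1 + β ^ 2) := Real.sqrt_pos.2 (by positivity)
  have hr : 0 < Real.sqrt (k ^ 2 + 1) := Real.sqrt_pos.2 (by positivity)
  generalize Real.sqrt (1 + β ^ 2) = s at *
  generalize Real.sqrt (k ^ 2 + 1) = r at *
  have hk0 : 0 < k := by linarith
  have hrs2 : (r * s) ^ 2 = (k ^ 2 + 1) * (1 + β ^ 2) := by rw [mul_pow, hr2, hs2]
  have ha : 1 < r * s - k * β := by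
    have : 1 + k * β < r * s := by
      apply lt_of_pow_lt_pow_left₀ 2 (by positivity)
      nlinarith [sq_pos_of_pos (sub_pos.2 hk)]
    linarith
  have hkb : 0 ≤ k * β := by positivity
  have hq1 : 0 < k * s - β * r := by
    have : β * r < k * s := by
      apply lt_of_pow_lt_pow_left₀ 2 (by positivity)
      rw [mul_pow, mul_pow, hr2, hs2]; nlinarith
    linarith
  have hq2 : 0 < k * s + β * r := by positivity
  have hden : ∀ x, 0 < k - β * Real.cos x := fun x => by
    nlinarith [Real.cos_le_one x]
  have main : ∀ x, HasDerivAt (fun x => 2 / s * (-Real.cos x * Real.arctan (s * Real.sin x / (k - β * Real.cos x)))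
      + (-(2 * k) * x
      + (r * s - k * β) / s * (x + 2 * 1 * Real.arctan (Real.sin x / ((r * s - k * β) + (k * s - β * r) - 1 * Real.cos x)))
      + (r * s + k * β) / s * (x + 2 * (-1) * Real.arctan (Real.sin x / ((r * s + k * β) + (k * s + β * r) - (-1) * Real.cos x)))))
      ((2 / s) * Real.arctan (s * Real.sin x / (k - β * Real.cos x)) * Real.sin x) x := by
    intro x
    have d1 := aux_deriv (r * s - k * β) (k * s - β * r) 1 (by norm_num) ha hq1
      (by linear_combination (k^2 - r^2) * hs2 + (β^2 - 1 - β^2) * hr2) x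
    have d2 := aux_deriv (r * s + k * β) (k * s + β * r) (-1) (by norm_num) (by linarith) hq2
      (by linear_combination (k^2 - r^2) * hs2 + (β^2 - 1 - β^2) * hr2) x
    have d0 := ((Real.hasDerivAt_cos x).neg.mul
      ((((Real.hasDerivAt_sin x).const_mul s).div
        (((Real.hasDerivAt_cos x).const_mul β).const_sub k) (hden x).ne').arctan)).const_mul (2 / s)
    have hd := d0.add ((((hasDerivAt_id x).const_mul (-(2 * k))).add
      (d1.const_mul ((r * s - k * β) / s))).add (d2.const_mul ((r * s + k * β) / s)))
    refine hd.congr_deriv ?_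
    have hA : 0 < r * s - k * β - 1 * Real.cos x := by linarith [Real.cos_le_one x]
    have hB : 0 < r * s + k * β - (-1) * Real.cos x := by linarith [Real.neg_one_le_cos x]
    have h0 := (hden x).ne'
    have e1 : 1 + (s * Real.sin x / (k - β * Real.cos x)) ^ 2
        = (r * s - k * β - 1 * Real.cos x) * (r * s + k * β - (-1) * Real.cos x)
          / (k - β * Real.cos x) ^ 2 := by
      field_simp
      linear_combination s^2 * Real.sin_sq_add_cos_sq x + (1 - Real.cos x ^ 2) * hs2 - hrs2
    simp only [Pi.div_apply, Pi.neg_apply]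
    rw [e1]
    have e2 : s * Real.cos x * (k - β * Real.cos x) - s * Real.sin x * -(β * -Real.sin x)
        = s * (k * Real.cos x - β) := by
      linear_combination (-s * β) * Real.sin_sq_add_cos_sq x
    have e3 : ((r * s - k * β) * (k * s - β * r) * (r * s + k * β - (-1) * Real.cos x)
        + (r * s + k * β) * (k * s + β * r) * (r * s - k * β - 1 * Real.cos x))
        = 2 * s * (Real.cos x * (k * Real.cos x - β)
          + k * ((r * s - k * β - 1 * Real.cos x) * (r * s + k * β - (-1) * Real.cos x))) := by
      linear_combination (r * s + k * β - (-1) * Real.cos x) * (r * k * hs2 - β * s * hr2)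
        + (r * s - k * β - 1 * Real.cos x) * (r * k * hs2 + β * s * hr2)
        + 2 * s * (-k * r ^ 2 * hs2 + k * β ^ 2 * hr2)
    rw [e2]
    clear d0 d1 d2 hd
    generalize r * s - k * β - 1 * Real.cos x = A at *
    generalize r * s + k * β - (-1) * Real.cos x = B at *
    generalize r * s - k * β = a at *
    generalize r * s + k * β = b at *
    generalize k * s - β * r = q at *
    generalize k * s + β * r = t at *
    generalize Real.arctan (s * Real.sin x / (k - β * Real.cos x)) = T
    generalize k - β * Real.cos x = d at *
    field_simp
    linear_combination e3
  rw [integral_eq_sub_of_hasDerivAt (fun x _ => main x)]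
  · simp
    field_simp
    ring
  · apply Continuous.intervalIntegrable
    have : Continuous fun x => s * Real.sin x / (k - β * Real.cos x) :=
      Continuous.div (by fun_prop) (by fun_prop) (fun x => (hden x).ne')
    fun_prop
end

section
/- For every real number k > 0, the integral ∫₀^π 2·arctan(sin φ / k)·sin φ dφ equals 2π(√(k²+1) − k). -/
open Real intervalIntegral

/-- For `k > 0`, `∫₀^π 2·arctan(sin φ / k)·sin φ dφ = 2π(√(k²+1) − k)`. -/
theorem spherical_inner_integral_beta_zero (k : ℝ) (hk : 0 < k) :
    ∫ φ in (0:ℝ)..π, 2 * Real.arctan (Real.sin φ / k) * Real.sin φ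
      = 2 * π * (Real.sqrt (k ^ 2 + 1) - k) := by
  obtain ⟨s, hs⟩ : ∃ s, s = Real.sqrt (k ^ 2 + 1) := ⟨_, rfl⟩
  rw [← hs]
  have hs0 : 0 < s := by rw [hs]; positivity
  have hs2 : s ^ 2 = k ^ 2 + 1 := by rw [hs]; exact Real.sq_sqrt (by positivity)
  have key : ∀ x ∈ Set.uIcc (0:ℝ) π, HasDerivAt (fun x : ℝ =>
      -2 * (Real.cos x * Real.arctan (Real.sin x / k)) + 2 * s * (x + Real.arctan
        (((s - k) * (Real.sin x * Real.cos x)) / (k * Real.cos x ^ 2 + s * Real.sin x ^ 2)))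
        - 2 * k * x)
      (2 * Real.arctan (Real.sin x / k) * Real.sin x) x := by
    intro x _
    have hc2 := Real.sin_sq_add_cos_sq x
    have hD : 0 < k * Real.cos x ^ 2 + s * Real.sin x ^ 2 := by
      by_cases h : Real.sin x = 0
      · have : Real.cos x ^ 2 = 1 := by rw [h] at hc2; linarith
        rw [h, this]; linarith
      · positivity
    have hS := Real.hasDerivAt_sin x
    have hC := Real.hasDerivAt_cos x
    have h1 := (hC.mul (hS.div_const k).arctan).const_mul (-2)
    have h2 := (((hS.mul hC).const_mul (s - k)).div
      (((hC.pow 2).const_mul k).add ((hS.pow 2).const_mul s)) hD.ne').arctan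
    have h3 := (h1.add (((hasDerivAt_id x).add h2).const_mul (2 * s))).sub
      ((hasDerivAt_id x).const_mul (2 * k))
    refine HasDerivAt.congr_deriv h3 ?_
    simp only [Pi.mul_apply, Pi.add_apply, Pi.pow_apply, Pi.div_apply]
    generalize Real.arctan (Real.sin x / k) = A
    generalize Real.sin x = S at *
    generalize Real.cos x = c at *
    have e1 : 1 / (1 + (S / k) ^ 2) * (c / k) = k * c / (k ^ 2 + S ^ 2) := by
      field_simp
    have hN : (k * c ^ 2 + s * S ^ 2) ^ 2 + ((s - k) * (S * c)) ^ 2 = k ^ 2 + S ^ 2 := by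
      have : (k * c ^ 2 + s * S ^ 2) ^ 2 + ((s - k) * (S * c)) ^ 2
        = (k ^ 2 * c ^ 2 + s ^ 2 * S ^ 2) * (S ^ 2 + c ^ 2) := by ring
      rw [this, hc2, hs2]; linear_combination k ^ 2 * hc2
    have hden : ∀ N D N' : ℝ, D ≠ 0 →
        1 / (1 + (N / D) ^ 2) * (N' / D ^ 2) = N' / (D ^ 2 + N ^ 2) := by
      intro N D N' h
      have : D ^ 2 + N ^ 2 ≠ 0 := by positivity
      field_simp
    rw [e1, hden _ _ _ hD.ne', hN]
    have hp : k ^ 2 + S ^ 2 ≠ 0 := by positivity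
    have hc : c ^ 2 = 1 - S ^ 2 := by linarith
    have e2 : (s - k) * (c * c + S * -S) * (k * c ^ 2 + s * S ^ 2) -
      (s - k) * (S * c) * (k * (2 * c * -S) + s * (2 * S * c)) = k * s - (k ^ 2 + S ^ 2) := by
      have : (s - k) * (c * c + S * -S) * (k * c ^ 2 + s * S ^ 2) -
        (s - k) * (S * c) * (k * (2 * c * -S) + s * (2 * S * c))
        = (s - k) * (k * c ^ 2 - s * S ^ 2) * (S ^ 2 + c ^ 2) := by ring
      rw [this, hc2, hc]; linear_combination (-S ^ 2) * hs2
    have e3 : (s - k) * (c * c + S * -S) * (k * c ^ 2 + s * S ^ 2) -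
      (s - k) * (S * c) * (k * ((2:ℕ) * c ^ (2 - 1) * -S) + s * ((2:ℕ) * S ^ (2 - 1) * c))
        = k * s - (k ^ 2 + S ^ 2) := by
      rw [← e2]; norm_num
    have e4 : ((-S) * A + c * (k * c / (k ^ 2 + S ^ 2))) * (-2) +
      2 * s * (1 + (k * s - (k ^ 2 + S ^ 2)) / (k ^ 2 + S ^ 2)) - 2 * k = 2 * A * S := by
      field_simp
      linear_combination (-k) * hc + k * hs2
    rw [← e4, ← e3]
    ring
  rw [integral_eq_sub_of_hasDerivAt key]
  · simp; ring
  · apply Continuous.intervalIntegrable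
    fun_prop
end

section
/- For all real numbers k > β > 1, the integral ∫₀^π (2/√(β²−1))·arctan( √(β²−1)·sin φ / (k − β·cos φ) )·sin φ dφ equals 2π(k − √(k²−1)). In particular, this integral is independent of β. -/
open Real intervalIntegral

lemma aux_G (r q : ℝ) (hr : 1 < r) (hq : 0 < q) (h : q ^ 2 = r ^ 2 - 1) (x : ℝ) :
    HasDerivAt (fun φ => φ + 2 * Real.arctan (Real.sin φ / (r + q - Real.cos φ)))
      (q / (r - Real.cos x)) x := by
  have hc := Real.cos_le_one x
  have h1 : r + q - Real.cos x ≠ 0 := by linarith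
  have h2 : r - Real.cos x ≠ 0 := by linarith
  have h3 : r + q ≠ 0 := by linarith
  have hd := (hasDerivAt_id x).add ((((Real.hasDerivAt_sin x).div
    ((Real.hasDerivAt_cos x).const_sub (r + q)) h1).arctan).const_mul 2)
  refine hd.congr_deriv ?_
  simp only [Pi.div_apply]
  have hs : Real.sin x ^ 2 = 1 - Real.cos x ^ 2 := by
    have := Real.sin_sq_add_cos_sq x; linarith
  generalize Real.cos x = c at *
  generalize Real.sin x = s at *
  have key : (r + q - c) ^ 2 + s ^ 2 = 2 * (r + q) * (r - c) := by
    rw [hs]; linear_combination h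
  have e1 : 1 + (s / (r + q - c)) ^ 2 = 2 * (r + q) * (r - c) / (r + q - c) ^ 2 := by
    rw [← key]; field_simp
  rw [e1]
  field_simp
  linear_combination (-1) * hs - h

lemma aux_T (k β s : ℝ) (hβ : 1 < β) (hk : β < k) (h : s ^ 2 = β ^ 2 - 1) (x : ℝ) :
    HasDerivAt (fun φ => Real.arctan (s * Real.sin φ / (k - β * Real.cos φ)))
      (s * (k * Real.cos x - β) /
        ((k - β * Real.cos x) ^ 2 + s ^ 2 * (1 - Real.cos x ^ 2))) x := by
  have hc := Real.cos_le_one x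
  have h1 : 0 < k - β * Real.cos x := by nlinarith
  have hd := ((((Real.hasDerivAt_sin x).const_mul s).div
    (((Real.hasDerivAt_cos x).const_mul β).const_sub k) h1.ne').arctan)
  refine hd.congr_deriv ?_
  simp only [Pi.div_apply]
  have hs : Real.sin x ^ 2 = 1 - Real.cos x ^ 2 := by
    have := Real.sin_sq_add_cos_sq x; linarith
  rw [← hs]
  generalize Real.cos x = c at *
  generalize Real.sin x = t at *
  have h2 : (k - β * c) ^ 2 + s ^ 2 * t ^ 2 ≠ 0 := by positivity
  have e1 : 1 + (s * t / (k - β * c)) ^ 2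
      = ((k - β * c) ^ 2 + s ^ 2 * t ^ 2) / (k - β * c) ^ 2 := by
    field_simp
  rw [e1]
  field_simp
  linear_combination (-β * s) * hs

theorem hyperbolic_inner_integral_beta_gt_one (k β : ℝ) (hβ : 1 < β) (hk : β < k) :
    ∫ φ in (0:ℝ)..π,
      (2 / Real.sqrt (β ^ 2 - 1)) *
        Real.arctan (Real.sqrt (β ^ 2 - 1) * Real.sin φ / (k - β * Real.cos φ)) *
        Real.sin φ
      = 2 * π * (k - Real.sqrt (k ^ 2 - 1)) := by
  have hs0 : 0 < Real.sqrt (β ^ 2 - 1) := Real.sqrt_pos.mpr (by nlinarith)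
  have hm0 : 0 < Real.sqrt (k ^ 2 - 1) := Real.sqrt_pos.mpr (by nlinarith)
  have hs : Real.sqrt (β ^ 2 - 1) ^ 2 = β ^ 2 - 1 := Real.sq_sqrt (by nlinarith)
  have hm : Real.sqrt (k ^ 2 - 1) ^ 2 = k ^ 2 - 1 := Real.sq_sqrt (by nlinarith)
  generalize Real.sqrt (β ^ 2 - 1) = s at *
  generalize Real.sqrt (k ^ 2 - 1) = m at *
  have hqm : 0 < m * β - k * s := by
    have : (k * s) ^ 2 < (m * β) ^ 2 := by
      rw [mul_pow, mul_pow, hs, hm]; nlinarith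
    have := lt_of_pow_lt_pow_left₀ 2 (by positivity) this
    linarith
  have hrm : 1 < k * β - m * s := by
    have h1 : 0 < k * β - 1 := by nlinarith
    have : (m * s) ^ 2 < (k * β - 1) ^ 2 := by
      rw [mul_pow, hs, hm]; nlinarith [mul_pos (sub_pos.mpr hk) (sub_pos.mpr hk)]
    have := lt_of_pow_lt_pow_left₀ 2 h1.le this
    linarith
  have hms : 0 < m * s := by positivity
  have hrp : 1 < k * β + m * s := by linarith
  have hqp : 0 < m * β + k * s := by
    have : 0 < k := by linarith
    positivity
  have hGp := aux_G _ _ hrp hqp (by linear_combination (β^2 - s^2) * hm + hs)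
  have hGm := aux_G _ _ hrm hqm (by linear_combination (β^2 - s^2) * hm + hs)
  have hT := aux_T k β s hβ hk hs
  have hF : ∀ x : ℝ, HasDerivAt (fun φ : ℝ =>
      -(Real.cos φ) * ((2 / s) * Real.arctan (s * Real.sin φ / (k - β * Real.cos φ)))
      + 2 * k * φ
      - ((k * β + m * s) / s) *
        (φ + 2 * Real.arctan (Real.sin φ / (k * β + m * s + (m * β + k * s) - Real.cos φ)))
      + ((k * β - m * s) / s) *
        (φ + 2 * Real.arctan (Real.sin φ / (k * β - m * s + (m * β - k * s) - Real.cos φ))))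
      ((2 / s) * Real.arctan (s * Real.sin x / (k - β * Real.cos x)) * Real.sin x) x := by
    intro x
    have hd := (((((Real.hasDerivAt_cos x).neg).mul ((hT x).const_mul (2 / s))).add
      ((hasDerivAt_id x).const_mul (2 * k))).sub
      ((hGp x).const_mul ((k * β + m * s) / s))).add
      ((hGm x).const_mul ((k * β - m * s) / s))
    refine hd.congr_deriv ?_
    have hc := Real.cos_le_one x
    generalize Real.arctan (s * Real.sin x / (k - β * Real.cos x)) = θ
    simp only [Pi.neg_apply]
    generalize Real.cos x = c at *
    generalize Real.sin x = t at *
    have h1 : k * β + m * s - c ≠ 0 := by linarith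
    have h2 : k * β - m * s - c ≠ 0 := by linarith
    have e : (k - β * c) ^ 2 + s ^ 2 * (1 - c ^ 2)
        = (k * β + m * s - c) * (k * β - m * s - c) := by
      linear_combination (1 - c^2 + m^2) * hs + (β^2-1) * hm
    rw [e]
    have e2 : (k * β + m * s) * (m * β + k * s) * (k * β - m * s - c)
        - (k * β - m * s) * (m * β - k * s) * (k * β + m * s - c)
        = 2 * s * (k * ((k * β + m * s - c) * (k * β - m * s - c)) - c * (k * c - β)) := by
      linear_combination (-2 * s * c * β) * hm
    have e3 : -c * (2 / s * (s * (k * c - β) / ((k * β + m * s - c) * (k * β - m * s - c))))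
        + 2 * k - (k * β + m * s) / s * ((m * β + k * s) / (k * β + m * s - c))
        + (k * β - m * s) / s * ((m * β - k * s) / (k * β - m * s - c)) = 0 := by
      clear e hd
      generalize k * β + m * s - c = A at *
      generalize k * β - m * s - c = B at *
      field_simp
      linear_combination (-1) * e2
    linear_combination e3
  rw [integral_eq_sub_of_hasDerivAt (fun x _ => hF x)]
  · simp
    field_simp
    ring
  · apply Continuous.intervalIntegrable
    have : ∀ x, k - β * Real.cos x ≠ 0 := fun x => by
      have := Real.cos_le_one x
      have : 0 < k - β * Real.cos x := by nlinarith
      exact this.ne'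
    fun_prop (disch := assumption)
end

section
/- Let P > 0 and A be real numbers and let k : [0, P] → ℝ be a continuous function with k(x) > 0 for all x ∈ [0, P]. Assume ∫₀^P k(x) dx = 2π − A and A ≥ ∫₀^P ( √(k(x)² + 1) − k(x) ) dx. Then P² + A² − 4πA ≤ 0. -/
open Real intervalIntegral

/-- Final arithmetic step of the spherical case: if `P > 0`, `k > 0` is continuous
on `[0, P]`, `∫₀^P k = 2π − A` and `A ≥ ∫₀^P (√(k²+1) − k)`, then
`P² + A² − 4πA ≤ 0`. -/
theorem spherical_final_step (P A : ℝ) (hP : 0 < P)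
    (k : ℝ → ℝ) (hcont : ContinuousOn k (Set.Icc 0 P))
    (hpos : ∀ x ∈ Set.Icc 0 P, 0 < k x)
    (hGB : (∫ x in (0:ℝ)..P, k x) = 2 * π - A)
    (hA : A ≥ ∫ x in (0:ℝ)..P, (Real.sqrt ((k x) ^ 2 + 1) - k x)) :
    P ^ 2 + A ^ 2 - 4 * π * A ≤ 0 := by
  have hle : (0:ℝ) ≤ P := hP.le
  have hu : Set.uIcc 0 P = Set.Icc 0 P := Set.uIcc_of_le hle
  have hsc : ContinuousOn (fun x => Real.sqrt ((k x) ^ 2 + 1)) (Set.Icc 0 P) :=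
    ((hcont.pow 2).add continuousOn_const).sqrt
  have hk : IntervalIntegrable k MeasureTheory.volume 0 P :=
    ContinuousOn.intervalIntegrable (by rw [hu]; exact hcont)
  have hs : IntervalIntegrable (fun x => Real.sqrt ((k x) ^ 2 + 1)) MeasureTheory.volume 0 P :=
    ContinuousOn.intervalIntegrable (by rw [hu]; exact hsc)
  rw [intervalIntegral.integral_sub hs hk, hGB] at hA
  set K := 2 * π - A with hK
  set R := Real.sqrt (K ^ 2 + P ^ 2) with hR
  have hR2 : R ^ 2 = K ^ 2 + P ^ 2 := Real.sq_sqrt (by positivity)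
  have hR0 : 0 < R := Real.sqrt_pos.mpr (by positivity)
  have hmono : (∫ x in (0:ℝ)..P, (K * k x + P)) ≤
      ∫ x in (0:ℝ)..P, R * Real.sqrt ((k x) ^ 2 + 1) := by
    apply intervalIntegral.integral_mono_on hle
      ((hk.const_mul K).add intervalIntegrable_const) (hs.const_mul R)
    intro x _
    rw [hR, ← Real.sqrt_mul (by positivity)]
    apply Real.le_sqrt_of_sq_le
    nlinarith [sq_nonneg (K - P * k x)]
  rw [intervalIntegral.integral_add (hk.const_mul K) intervalIntegrable_const,
    intervalIntegral.integral_const_mul, intervalIntegral.integral_const_mul,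
    intervalIntegral.integral_const, hGB, smul_eq_mul] at hmono
  have hS : R ≤ ∫ x in (0:ℝ)..P, Real.sqrt ((k x) ^ 2 + 1) := by
    refine le_of_mul_le_mul_left ?_ hR0
    nlinarith
  have h2 : R ≤ 2 * π := by linarith
  have h3 : R ^ 2 ≤ (2 * π) ^ 2 := by gcongr
  rw [hR2, hK] at h3
  nlinarith
end

section
/- Let P > 0 and A be real numbers and let k : [0, P] → ℝ be a continuous function with k(x) ≥ 1 for all x ∈ [0, P]. Assume ∫₀^P k(x) dx = A + 2π and A ≥ ∫₀^P ( k(x) − √(k(x)² − 1) ) dx. Then A² + 4πA − P² ≥ 0. -/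
open Real intervalIntegral

/-- Final arithmetic step of the hyperbolic case: if `P > 0`, `k ≥ 1` is continuous
on `[0, P]`, `∫₀^P k = A + 2π` and `A ≥ ∫₀^P (k − √(k²−1))`, then
`A² + 4πA − P² ≥ 0`. -/
theorem hyperbolic_final_step (P A : ℝ) (hP : 0 < P)
    (k : ℝ → ℝ) (hcont : ContinuousOn k (Set.Icc 0 P))
    (hk : ∀ x ∈ Set.Icc 0 P, 1 ≤ k x)
    (hGB : (∫ x in (0:ℝ)..P, k x) = A + 2 * π)
    (hA : A ≥ ∫ x in (0:ℝ)..P, (k x - Real.sqrt ((k x) ^ 2 - 1))) :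
    A ^ 2 + 4 * π * A - P ^ 2 ≥ 0 := by
  have hu : Set.uIcc 0 P = Set.Icc 0 P := Set.uIcc_of_le hP.le
  have hki : IntervalIntegrable k MeasureTheory.volume 0 P :=
    ContinuousOn.intervalIntegrable (by rwa [hu])
  have hsi : IntervalIntegrable (fun x => Real.sqrt ((k x) ^ 2 - 1)) MeasureTheory.volume 0 P := by
    apply ContinuousOn.intervalIntegrable
    rw [hu]
    exact ((hcont.pow 2).sub continuousOn_const).sqrt
  rw [intervalIntegral.integral_sub hki hsi, hGB] at hA
  set S := ∫ x in (0:ℝ)..P, Real.sqrt ((k x) ^ 2 - 1) with hS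
  have hS2 : 2 * π ≤ S := by linarith
  have hpi := Real.pi_pos
  set c := Real.sqrt (P ^ 2 + (2 * π) ^ 2) with hc
  have hc2 : c ^ 2 = P ^ 2 + (2 * π) ^ 2 := Real.sq_sqrt (by positivity)
  have hcpos : 0 < c := Real.sqrt_pos.mpr (by positivity)
  have hmono : (∫ x in (0:ℝ)..P, (P + 2 * π * Real.sqrt ((k x) ^ 2 - 1)))
      ≤ ∫ x in (0:ℝ)..P, c * k x := by
    apply intervalIntegral.integral_mono_on hP.le
    · exact intervalIntegrable_const.add (hsi.const_mul _)
    · exact hki.const_mul _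
    · intro x hx
      have h1 := hk x hx
      have h2 : Real.sqrt ((k x) ^ 2 - 1) ^ 2 = (k x) ^ 2 - 1 := Real.sq_sqrt (by nlinarith)
      refine (sq_le_sq₀ (by positivity) (by positivity)).mp ?_
      rw [mul_pow, hc2]
      nlinarith [sq_nonneg (P * Real.sqrt ((k x) ^ 2 - 1) - 2 * π)]
  rw [intervalIntegral.integral_add intervalIntegrable_const (hsi.const_mul _),
    intervalIntegral.integral_const_mul, intervalIntegral.integral_const_mul, hGB,
    intervalIntegral.integral_const, ← hS] at hmono
  simp only [sub_zero, smul_eq_mul] at hmono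
  have h3 : c * c ≤ c * (A + 2 * π) := by nlinarith
  have h4 : c ≤ A + 2 * π := le_of_mul_le_mul_left h3 hcpos
  nlinarith
end
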